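/- The subgroup D¹_1 = {x_{a,b} ∈ D¹ : v_D(x_{a,b} − 1) ≥ 1} is normal in D¹, and the map x_{a,b} ↦ (a mod P_E) induces a group isomorphism from D¹/D¹_1 onto the norm-one subgroup {u ∈ k_E^× : u^{p+1} = 1} of the multiplicative group of the residue field k_E of E. In particular D¹/D¹_1 is cyclic of order q + 1, where q = p is the residue cardinality of F. -/

import Mathlib

noncomputable section
open Matrix

/-- The image of `p` in `E`. -/
def pE (p : ℕ) [Fact p.Prime] (E : Type) [Field E] [Algebra ℚ_[p] E] : E :=
  algebraMap ℚ_[p] E (p : ℚ_[p])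

/-- The ring of integers `O_E = ℤ_p + ℤ_p·α` of the unramified quadratic extension
`E = F(α)`, as a set. -/
def OE (p : ℕ) [Fact p.Prime] (E : Type) [Field E] [Algebra ℚ_[p] E] (α : E) : Set E :=
  {x | ∃ a b : ℤ_[p],
    x = algebraMap ℚ_[p] E (a : ℚ_[p]) + algebraMap ℚ_[p] E (b : ℚ_[p]) * α}

/-- The element `x_{a,b} = !![a, b; p·conj b, conj a]` of the quaternion division algebra
`D ⊆ M₂(E)`. -/
def qmat (p : ℕ) [Fact p.Prime] (E : Type) [Field E] [Algebra ℚ_[p] E]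
    (conj : E → E) (a b : E) : Matrix (Fin 2) (Fin 2) E :=
  !![a, b; pE p E * conj b, conj a]

/-- The uniformizer `δ = x_{0,1}` of `D`, with `δ² = p`. -/
def deltaM (p : ℕ) [Fact p.Prime] (E : Type) [Field E] [Algebra ℚ_[p] E] :
    Matrix (Fin 2) (Fin 2) E :=
  !![0, 1; pE p E, 0]

/-- The maximal order `O_D = {x_{a,b} : a, b ∈ O_E}` of `D`, as a set. -/
def ODset (p : ℕ) [Fact p.Prime] (E : Type) [Field E] [Algebra ℚ_[p] E]
    (α : E) (conj : E → E) : Set (Matrix (Fin 2) (Fin 2) E) :=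
  {m | ∃ a b : E, a ∈ OE p E α ∧ b ∈ OE p E α ∧ m = qmat p E conj a b}

/-- The norm-one group `D¹ = {x ∈ D : det x = 1}`, as a set. -/
def D1set (p : ℕ) [Fact p.Prime] (E : Type) [Field E] [Algebra ℚ_[p] E]
    (conj : E → E) : Set (Matrix (Fin 2) (Fin 2) E) :=
  {m | (∃ a b : E, m = qmat p E conj a b) ∧ m.det = 1}

/-- `vDge p E α conj r m` says `v_D(m) ≥ r`, i.e. `m ∈ δ^r·O_D = P_D^r`. -/
def vDge (p : ℕ) [Fact p.Prime] (E : Type) [Field E] [Algebra ℚ_[p] E]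
    (α : E) (conj : E → E) (r : ℕ) (m : Matrix (Fin 2) (Fin 2) E) : Prop :=
  ∃ yy ∈ ODset p E α conj, m = deltaM p E ^ r * yy

/-- `x ∈ P_E = p·O_E`. -/
def inPE (p : ℕ) [Fact p.Prime] (E : Type) [Field E] [Algebra ℚ_[p] E]
    (α : E) (x : E) : Prop :=
  ∃ c ∈ OE p E α, x = pE p E * c

section Reduction

open QuadraticAlgebra

variable {p : ℕ} [Fact p.Prime]

lemma PadicInt.toZMod_eq_zero_iff_dvd {x : ℤ_[p]} : PadicInt.toZMod x = 0 ↔ (p : ℤ_[p]) ∣ x := by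
  rw [← RingHom.mem_ker, PadicInt.ker_toZMod, PadicInt.maximalIdeal_eq_span_p,
    Ideal.mem_span_singleton]

/-- Hensel's lemma for square roots in `ℤ_p`, `p` odd. -/
lemma PadicInt.exists_mul_self_eq (hp : p ≠ 2) {u w : ℤ_[p]} (hw : PadicInt.toZMod w ≠ 0)
    (h : PadicInt.toZMod w * PadicInt.toZMod w = PadicInt.toZMod u) :
    ∃ c : ℤ_[p], c * c = u ∧ PadicInt.toZMod c = PadicInt.toZMod w := by
  have hdvd (x : ℤ_[p]) : x ∈ IsLocalRing.maximalIdeal ℤ_[p] ↔ PadicInt.toZMod x = 0 := by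
    rw [← PadicInt.ker_toZMod, RingHom.mem_ker]
  have h2 : (2 : ZMod p) ≠ 0 := Ring.two_ne_zero (by rwa [ZMod.ringChar_zmod_n])
  obtain ⟨c, hc, hcw⟩ := HenselianRing.is_henselian (I := IsLocalRing.maximalIdeal ℤ_[p])
    (Polynomial.X ^ 2 - Polynomial.C u) (Polynomial.monic_X_pow_sub_C u two_ne_zero) w
    (by rw [hdvd]; simp [pow_two, h])
    (by
      refine IsUnit.map _ ?_
      rw [← not_not (a := IsUnit _), ← mem_nonunits_iff, ← IsLocalRing.mem_maximalIdeal, hdvd]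
      simp [one_add_one_eq_two, map_ofNat, h2, hw])
  refine ⟨c, ?_, ?_⟩
  · have : c ^ 2 - u = 0 := by simpa [Polynomial.IsRoot] using hc
    rw [← pow_two]
    exact sub_eq_zero.mp this
  · rw [hdvd, map_sub] at hcw
    exact sub_eq_zero.mp hcw

lemma PadicInt.toZMod_ne_sq_of_not_square (hp : p ≠ 2) {z : ℤ_[p]ˣ}
    (hz : ¬ ∃ w : ℤ_[p], w * w = (z : ℤ_[p])) (r : ZMod p) :
    r ^ 2 ≠ PadicInt.toZMod (z : ℤ_[p]) + 0 * r := by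
  intro h
  obtain ⟨w, rfl⟩ := ZMod.ringHom_surjective (PadicInt.toZMod (p := p)) r
  rw [zero_mul, add_zero, pow_two] at h
  have hw : PadicInt.toZMod w ≠ 0 := by
    intro h0
    rw [h0, zero_mul] at h
    exact (z.isUnit.map (PadicInt.toZMod (p := p))).ne_zero h.symm
  obtain ⟨c, hc, -⟩ := PadicInt.exists_mul_self_eq hp hw h
  exact hz ⟨c, hc⟩

lemma QuadraticAlgebra.pow_card_add_one (hp : p ≠ 2) (a : ZMod p)
    (ha : ∀ r : ZMod p, r ^ 2 ≠ a + 0 * r) (x : QuadraticAlgebra (ZMod p) a 0) :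
    x ^ (p + 1) = algebraMap (ZMod p) _ x.norm := by
  have hp2 : p = 2 * (p / 2) + 1 := by
    have := (Fact.out : p.Prime).eq_two_or_odd
    omega
  have ha0 : a ≠ 0 := by
    rintro rfl
    exact ha 0 (by simp)
  have hsq : ¬ IsSquare a := by
    rintro ⟨r, hr⟩
    exact ha r (by rw [hr]; ring)
  have hlegendre : a ^ (p / 2) = -1 :=
    (ZMod.pow_div_two_eq_neg_one_or_one p ha0).resolve_left
      (fun h => hsq ((ZMod.euler_criterion p ha0).mpr h))
  have : CharP (QuadraticAlgebra (ZMod p) a 0) p :=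
    charP_of_injective_algebraMap (algebraMap_injective (a := a) (b := 0)) p
  have hω : (ω : QuadraticAlgebra (ZMod p) a 0) ^ p = -ω := by
    have h2 : (ω : QuadraticAlgebra (ZMod p) a 0) ^ 2 = algebraMap (ZMod p) _ a := by
      rw [pow_two]
      ext <;> simp
    calc (ω : QuadraticAlgebra (ZMod p) a 0) ^ p = ω ^ (2 * (p / 2) + 1) := by rw [← hp2]
      _ = -ω := by rw [pow_succ, pow_mul, h2, ← map_pow, hlegendre]; simp
  have hx : x = algebraMap (ZMod p) _ x.re + algebraMap (ZMod p) _ x.im * ω := by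
    ext <;> simp
  have hfrob : x ^ p = star x := by
    conv_lhs => rw [hx]
    rw [add_pow_char, mul_pow, hω, ← map_pow, ← map_pow, ZMod.pow_card, ZMod.pow_card]
    ext <;> simp
  rw [pow_succ, hfrob, mul_comm, algebraMap_norm_eq_mul_star]

lemma QuadraticAlgebra.exists_isPrimitiveRoot (a : ZMod p)
    [Fact (∀ r : ZMod p, r ^ 2 ≠ a + 0 * r)] :
    ∃ u : QuadraticAlgebra (ZMod p) a 0, IsPrimitiveRoot u (p + 1) := by
  have : Finite (QuadraticAlgebra (ZMod p) a 0) := .of_equiv _ (equivProd a 0).symm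
  have hcard : Nat.card (QuadraticAlgebra (ZMod p) a 0)ˣ = (p - 1) * (p + 1) := by
    rw [Nat.card_units, Nat.card_congr (equivProd a 0), Nat.card_prod, Nat.card_zmod,
      mul_comm (p - 1)]
    simpa using Nat.mul_self_sub_mul_self_eq p 1
  obtain ⟨ζ, hζ⟩ := IsCyclic.exists_ofOrder_eq_natCard (α := (QuadraticAlgebra (ZMod p) a 0)ˣ)
  have hζ' := IsPrimitiveRoot.orderOf ζ
  rw [hζ, hcard] at hζ'
  have hpos : 0 < (p - 1) * (p + 1) :=
    Nat.mul_pos (Nat.sub_pos_of_lt (Fact.out : p.Prime).one_lt) p.succ_pos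
  exact ⟨_, IsPrimitiveRoot.coe_units_iff.mpr (hζ'.pow hpos rfl)⟩

/-- Coefficientwise reduction modulo `p` on `ℤ_p[√z]`. -/
def redHom (z : ℤ_[p]) :
    QuadraticAlgebra ℤ_[p] z 0 →+* QuadraticAlgebra (ZMod p) (PadicInt.toZMod z) 0 where
  toFun x := ⟨PadicInt.toZMod x.re, PadicInt.toZMod x.im⟩
  map_one' := by ext <;> simp
  map_zero' := by ext <;> simp
  map_mul' x y := by ext <;> simp
  map_add' x y := by ext <;> simp

lemma redHom_surjective (z : ℤ_[p]) : Function.Surjective (redHom z) := by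
  rintro ⟨a, b⟩
  obtain ⟨a, rfl⟩ := ZMod.ringHom_surjective (PadicInt.toZMod (p := p)) a
  obtain ⟨b, rfl⟩ := ZMod.ringHom_surjective (PadicInt.toZMod (p := p)) b
  exact ⟨⟨a, b⟩, rfl⟩

lemma redHom_eq_zero_iff {z : ℤ_[p]} {x : QuadraticAlgebra ℤ_[p] z 0} :
    redHom z x = 0 ↔ ∃ y, x = (p : QuadraticAlgebra ℤ_[p] z 0) * y := by
  constructor
  · intro h
    obtain ⟨a, ha⟩ := PadicInt.toZMod_eq_zero_iff_dvd.mp (congrArg QuadraticAlgebra.re h)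
    obtain ⟨b, hb⟩ := PadicInt.toZMod_eq_zero_iff_dvd.mp (congrArg QuadraticAlgebra.im h)
    exact ⟨⟨a, b⟩, by ext <;> simp [ha, hb]⟩
  · rintro ⟨y, rfl⟩
    rw [map_mul, map_natCast]
    ext <;> simp

lemma norm_redHom {z : ℤ_[p]} (x : QuadraticAlgebra ℤ_[p] z 0) :
    (redHom z x).norm = PadicInt.toZMod x.norm := by
  simp [QuadraticAlgebra.norm_def, redHom]

lemma dvd_of_dvd_norm {z : ℤ_[p]} (hz : ∀ r : ZMod p, r ^ 2 ≠ PadicInt.toZMod z + 0 * r)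
    {x : QuadraticAlgebra ℤ_[p] z 0} (h : (p : ℤ_[p]) ∣ x.norm) :
    ∃ y, x = (p : QuadraticAlgebra ℤ_[p] z 0) * y := by
  have : Fact (∀ r : ZMod p, r ^ 2 ≠ PadicInt.toZMod z + 0 * r) := ⟨hz⟩
  rw [← redHom_eq_zero_iff, ← QuadraticAlgebra.norm_eq_zero_iff_eq_zero, norm_redHom]
  exact PadicInt.toZMod_eq_zero_iff_dvd.mpr h

lemma exists_eq_pow_mul_of_norm_sub_eq {z : ℤ_[p]}
    (hz : ∀ r : ZMod p, r ^ 2 ≠ PadicInt.toZMod z + 0 * r) (n : ℕ) :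
    ∀ x y : QuadraticAlgebra ℤ_[p] z 0, x.norm - p * y.norm = (p : ℤ_[p]) ^ (2 * n) →
      ∃ x' y', x = (p : QuadraticAlgebra ℤ_[p] z 0) ^ n * x' ∧
        y = (p : QuadraticAlgebra ℤ_[p] z 0) ^ n * y' ∧ x'.norm - p * y'.norm = 1 := by
  have hp0 : (p : ℤ_[p]) ≠ 0 := Nat.cast_ne_zero.mpr (Fact.out : p.Prime).ne_zero
  induction n with
  | zero => exact fun x y h => ⟨x, y, by simpa using h⟩
  | succ n ih =>
    intro x y h
    obtain ⟨x, rfl⟩ := dvd_of_dvd_norm hz (x := x)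
      ⟨y.norm + p ^ (2 * n + 1), by linear_combination h⟩
    rw [map_mul, QuadraticAlgebra.norm_natCast] at h
    obtain ⟨y, rfl⟩ := dvd_of_dvd_norm hz (x := y)
      ⟨x.norm - p ^ (2 * n), mul_left_cancel₀ hp0 (by linear_combination -h)⟩
    rw [map_mul, QuadraticAlgebra.norm_natCast] at h
    obtain ⟨x', y', rfl, rfl, h'⟩ := ih x y
      (mul_left_cancel₀ (pow_ne_zero 2 hp0) (by linear_combination h))
    exact ⟨x', y', by ring, by ring, h'⟩

variable {z : ℤ_[p]} {E : Type} [Field E] [Algebra ℚ_[p] E] {α : E}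

/-- The embedding of `ℤ_p[√z]` in `E` sending `√z` to `α`, with image `O_E`. -/
def toE (hα : α * α = algebraMap ℚ_[p] E (z : ℚ_[p])) : QuadraticAlgebra ℤ_[p] z 0 →+* E where
  toFun x := algebraMap ℚ_[p] E (x.re : ℚ_[p]) + algebraMap ℚ_[p] E (x.im : ℚ_[p]) * α
  map_one' := by simp
  map_zero' := by simp
  map_mul' x y := by
    simp only [re_mul, im_mul, PadicInt.coe_add, PadicInt.coe_mul, map_add, map_mul,
      PadicInt.coe_zero, map_zero]
    linear_combination (-algebraMap ℚ_[p] E x.im * algebraMap ℚ_[p] E y.im) * hα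
  map_add' x y := by
    simp only [re_add, im_add, PadicInt.coe_add, map_add]
    ring

variable (hα : α * α = algebraMap ℚ_[p] E (z : ℚ_[p]))

lemma mem_OE_iff {x : E} : x ∈ OE p E α ↔ ∃ r, x = toE hα r :=
  ⟨fun ⟨a, b, h⟩ => ⟨⟨a, b⟩, h⟩, fun ⟨r, h⟩ => ⟨r.re, r.im, h⟩⟩

lemma toE_mem_OE (r : QuadraticAlgebra ℤ_[p] z 0) : toE hα r ∈ OE p E α :=
  (mem_OE_iff hα).mpr ⟨r, rfl⟩

lemma toE_algebraMap (a : ℤ_[p]) :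
    toE hα (algebraMap ℤ_[p] _ a) = algebraMap ℚ_[p] E (a : ℚ_[p]) := by
  simp [toE]

lemma toE_natCast_p : toE hα (p : QuadraticAlgebra ℤ_[p] z 0) = pE p E := by
  simp [pE]

lemma pE_ne_zero : pE p E ≠ 0 := by
  rw [pE, map_ne_zero]
  exact Nat.cast_ne_zero.mpr (Fact.out : p.Prime).ne_zero

lemma toE_injective (hα0 : α ∉ Set.range (algebraMap ℚ_[p] E)) :
    Function.Injective (toE hα) := by
  rw [injective_iff_map_eq_zero]
  intro x hx
  replace hx : algebraMap ℚ_[p] E (x.re : ℚ_[p]) + algebraMap ℚ_[p] E (x.im : ℚ_[p]) * α = 0 := hx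
  have him : (x.im : ℚ_[p]) = 0 := by
    by_contra h
    refine hα0 ⟨-(x.re : ℚ_[p]) / x.im, ?_⟩
    rw [map_div₀, map_neg, div_eq_iff (by simpa using h)]
    linear_combination -hx
  have hre : (x.re : ℚ_[p]) = 0 := by simpa [him] using hx
  ext
  exacts [PadicInt.coe_eq_zero.mp hre, PadicInt.coe_eq_zero.mp him]

lemma inPE_toE_iff (hα0 : α ∉ Set.range (algebraMap ℚ_[p] E)) {x : QuadraticAlgebra ℤ_[p] z 0} :
    inPE p E α (toE hα x) ↔ redHom z x = 0 := by
  rw [redHom_eq_zero_iff]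
  constructor
  · rintro ⟨c, hc, hx⟩
    obtain ⟨y, rfl⟩ := (mem_OE_iff hα).mp hc
    exact ⟨y, toE_injective hα hα0 (by rw [hx, map_mul, toE_natCast_p])⟩
  · rintro ⟨y, rfl⟩
    exact ⟨_, toE_mem_OE hα y, by rw [map_mul, toE_natCast_p]⟩

lemma exists_pow_mul_eq_coe (a : ℚ_[p]) :
    ∃ n : ℕ, ∀ m ≥ n, ∃ b : ℤ_[p], (p : ℚ_[p]) ^ m * a = b := by
  have hp1 : (1 : ℝ) < p := by exact_mod_cast (Fact.out : p.Prime).one_lt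
  obtain ⟨n, hn⟩ := pow_unbounded_of_one_lt ‖a‖ hp1
  refine ⟨n, fun m hm => ⟨⟨(p : ℚ_[p]) ^ m * a, ?_⟩, rfl⟩⟩
  have : ‖a‖ ≤ (p : ℝ) ^ m := hn.le.trans (pow_le_pow_right₀ hp1.le hm)
  rw [norm_mul, norm_pow, Padic.norm_p, inv_pow]
  exact inv_mul_le_one_of_le₀ this (by positivity)

lemma exists_pow_mul_eq_toE
    (hspan : ∀ x : E, ∃ a b : ℚ_[p], x = algebraMap ℚ_[p] E a + algebraMap ℚ_[p] E b * α)
    (x : E) : ∃ n : ℕ, ∀ m ≥ n, ∃ r, pE p E ^ m * x = toE hα r := by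
  obtain ⟨a, b, rfl⟩ := hspan x
  obtain ⟨n, hn⟩ := exists_pow_mul_eq_coe a
  obtain ⟨k, hk⟩ := exists_pow_mul_eq_coe b
  refine ⟨max n k, fun m hm => ?_⟩
  obtain ⟨c, hc⟩ := hn m (le_of_max_le_left hm)
  obtain ⟨d, hd⟩ := hk m (le_of_max_le_right hm)
  refine ⟨⟨c, d⟩, ?_⟩
  simp only [toE, RingHom.coe_mk, MonoidHom.coe_mk, OneHom.coe_mk, ← hc, ← hd, map_mul, map_pow, pE]
  ring

variable {conj : E →ₐ[ℚ_[p]] E}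

lemma conj_toE (hconj : conj α = -α) (x : QuadraticAlgebra ℤ_[p] z 0) :
    conj (toE hα x) = toE hα (star x) := by
  simp [toE, hconj]

lemma toE_mul_conj (hconj : conj α = -α) (x : QuadraticAlgebra ℤ_[p] z 0) :
    toE hα x * conj (toE hα x) = algebraMap ℚ_[p] E (x.norm : ℤ_[p]) := by
  rw [conj_toE hα hconj, ← map_mul, ← QuadraticAlgebra.algebraMap_norm_eq_mul_star, toE_algebraMap]

lemma det_qmat_toE (hconj : conj α = -α) (x y : QuadraticAlgebra ℤ_[p] z 0) :
    (qmat p E conj (toE hα x) (toE hα y)).det =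
      algebraMap ℚ_[p] E ((x.norm - p * y.norm : ℤ_[p]) : ℚ_[p]) := by
  rw [qmat, Matrix.det_fin_two_of, toE_mul_conj hα hconj, mul_left_comm, toE_mul_conj hα hconj]
  simp [pE]

lemma qmat_smul (n : ℕ) (a b : E) :
    qmat p E conj (pE p E ^ n * a) (pE p E ^ n * b) = pE p E ^ n • qmat p E conj a b := by
  ext i j
  fin_cases i <;> fin_cases j <;> simp [qmat, pE, mul_left_comm]

variable (conj) in
/-- `m ∈ D¹` has integral entries `x_{a,b}`, with `a` reducing to `u` in the residue field. -/
def ReducesTo (m : Matrix (Fin 2) (Fin 2) E)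
    (u : QuadraticAlgebra (ZMod p) (PadicInt.toZMod z) 0) : Prop :=
  ∃ r s : QuadraticAlgebra ℤ_[p] z 0, r.norm - p * s.norm = 1 ∧
    m = qmat p E conj (toE hα r) (toE hα s) ∧ redHom z r = u

variable {hα} {m m' : Matrix (Fin 2) (Fin 2) E}
  {u u' : QuadraticAlgebra (ZMod p) (PadicInt.toZMod z) 0}

lemma ReducesTo.mem_D1set (hconj : conj α = -α) (h : ReducesTo hα conj m u) :
    m ∈ D1set p E conj := by
  obtain ⟨r, s, hrs, rfl, -⟩ := h
  refine ⟨⟨_, _, rfl⟩, ?_⟩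
  rw [det_qmat_toE hα hconj, hrs]
  simp

variable (hα) in
lemma exists_reducesTo (hz : ∀ r : ZMod p, r ^ 2 ≠ PadicInt.toZMod z + 0 * r)
    (hspan : ∀ x : E, ∃ a b : ℚ_[p], x = algebraMap ℚ_[p] E a + algebraMap ℚ_[p] E b * α)
    (hconj : conj α = -α) (hm : m ∈ D1set p E conj) : ∃ u, ReducesTo hα conj m u := by
  obtain ⟨⟨a, b, rfl⟩, hdet⟩ := hm
  obtain ⟨n, hn⟩ := exists_pow_mul_eq_toE hα hspan a
  obtain ⟨k, hk⟩ := exists_pow_mul_eq_toE hα hspan b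
  obtain ⟨x, hx⟩ := hn (max n k) (le_max_left _ _)
  obtain ⟨y, hy⟩ := hk (max n k) (le_max_right _ _)
  have hxy : x.norm - p * y.norm = (p : ℤ_[p]) ^ (2 * max n k) := by
    have h := det_qmat_toE hα hconj x y
    rw [← hx, ← hy, qmat_smul, Matrix.det_smul, hdet, mul_one, Fintype.card_fin, ← pow_mul,
      pE, ← map_pow] at h
    have h' := (algebraMap ℚ_[p] E).injective h
    rw [mul_comm 2]
    exact PadicInt.ext (by simpa using h'.symm)
  obtain ⟨r, s, rfl, rfl, hrs⟩ := exists_eq_pow_mul_of_norm_sub_eq hz _ x y hxy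
  rw [map_mul, map_pow, toE_natCast_p] at hx hy
  have hp0 := pow_ne_zero (max n k) (pE_ne_zero (p := p) (E := E))
  exact ⟨_, r, s, hrs, by rw [mul_left_cancel₀ hp0 hx, mul_left_cancel₀ hp0 hy], rfl⟩

lemma ReducesTo.mul (hconj : conj α = -α) (h : ReducesTo hα conj m u)
    (h' : ReducesTo hα conj m' u') : ReducesTo hα conj (m * m') (u * u') := by
  obtain ⟨r, s, hrs, rfl, rfl⟩ := h
  obtain ⟨r', s', hrs', rfl, rfl⟩ := h'
  refine ⟨r * r' + p * (s * star s'), r * s' + s * star r', ?_, ?_, ?_⟩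
  · have hmul : (r * r' + p * (s * star s')).norm - p * (r * s' + s * star r').norm =
        (r.norm - p * s.norm) * (r'.norm - p * s'.norm) := by
      simp [QuadraticAlgebra.norm_def]
      ring
    rw [hmul, hrs, hrs', one_mul]
  · simp only [qmat, conj_toE hα hconj, map_add, map_mul, toE_natCast_p, star_star]
    ext i j
    fin_cases i <;> fin_cases j <;> simp [Matrix.mul_apply, Fin.sum_univ_two, pE] <;> ring
  · rw [map_add, redHom_eq_zero_iff.mpr ⟨_, rfl⟩, add_zero, map_mul]

lemma ReducesTo.one : ReducesTo hα conj 1 1 := by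
  refine ⟨1, 0, by simp, ?_, map_one _⟩
  simp [qmat, Matrix.one_fin_two]

lemma ReducesTo.pow (hconj : conj α = -α) (h : ReducesTo hα conj m u) (n : ℕ) :
    ReducesTo hα conj (m ^ n) (u ^ n) := by
  induction n with
  | zero => simpa using ReducesTo.one
  | succ n ih => simpa only [pow_succ] using ih.mul hconj h

lemma ReducesTo.unique (hα0 : α ∉ Set.range (algebraMap ℚ_[p] E))
    (h : ReducesTo hα conj m u) (h' : ReducesTo hα conj m u') : u = u' := by
  obtain ⟨r, s, -, rfl, rfl⟩ := h
  obtain ⟨r', s', -, h, rfl⟩ := h'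
  rw [toE_injective hα hα0 (congrFun (congrFun h 0) 0)]

lemma ReducesTo.exists_mul_eq_one (hconj : conj α = -α) (h : ReducesTo hα conj m u) :
    ∃ m' u', ReducesTo hα conj m' u' ∧ m * m' = 1 := by
  have hdet := (h.mem_D1set hconj).2
  obtain ⟨r, s, hrs, rfl, -⟩ := h
  refine ⟨_, _, ⟨star r, -s, by simpa using hrs, rfl, rfl⟩, ?_⟩
  rw [← one_smul E (1 : Matrix (Fin 2) (Fin 2) E), ← hdet, ← Matrix.mul_adjugate]
  congr 1
  simp [qmat, Matrix.adjugate_fin_two_of, conj_toE hα hconj]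

lemma ReducesTo.inPE_sub_iff (hα0 : α ∉ Set.range (algebraMap ℚ_[p] E))
    (h : ReducesTo hα conj m u) (x : QuadraticAlgebra ℤ_[p] z 0) :
    inPE p E α (m 0 0 - toE hα x) ↔ u = redHom z x := by
  obtain ⟨r, s, -, rfl, rfl⟩ := h
  rw [← sub_eq_zero (a := redHom z r), ← map_sub, ← inPE_toE_iff hα hα0, map_sub]
  rfl

lemma ReducesTo.inPE_sub_one_iff (hα0 : α ∉ Set.range (algebraMap ℚ_[p] E))
    (h : ReducesTo hα conj m u) : inPE p E α (m 0 0 - 1) ↔ u = 1 := by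
  simpa using h.inPE_sub_iff hα0 1

lemma deltaM_mul_qmat (a b : E) :
    deltaM p E * qmat p E conj a b = !![pE p E * conj b, conj a; pE p E * a, pE p E * b] := by
  simp [deltaM, qmat]

lemma ReducesTo.vDge_sub_one_iff (hconj : conj α = -α)
    (hα0 : α ∉ Set.range (algebraMap ℚ_[p] E)) (h : ReducesTo hα conj m u) :
    vDge p E α conj 1 (m - 1) ↔ u = 1 := by
  rw [← h.inPE_sub_one_iff hα0]
  constructor
  · rintro ⟨_, ⟨a, b, -, hb, rfl⟩, hm⟩
    obtain ⟨y, rfl⟩ := (mem_OE_iff hα).mp hb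
    rw [pow_one, deltaM_mul_qmat, conj_toE hα hconj] at hm
    exact ⟨_, toE_mem_OE hα (star y), by simpa using congrFun (congrFun hm 0) 0⟩
  · rintro ⟨c, hc, hm⟩
    obtain ⟨y, rfl⟩ := (mem_OE_iff hα).mp hc
    obtain ⟨r, s, -, rfl, -⟩ := h
    replace hm : toE hα r - 1 = pE p E * toE hα y := hm
    have hr : r = 1 + p * y := toE_injective hα hα0 (by
      rw [map_add, map_mul, map_one, toE_natCast_p, ← hm]
      ring)
    refine ⟨_, ⟨_, _, toE_mem_OE hα (star s), toE_mem_OE hα (star y), rfl⟩, ?_⟩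
    rw [pow_one, deltaM_mul_qmat]
    subst hr
    ext i j
    fin_cases i <;> fin_cases j <;>
      simp [qmat, conj_toE hα hconj, pE]

lemma ReducesTo.pow_eq_one (hp : p ≠ 2)
    (hz : ∀ r : ZMod p, r ^ 2 ≠ PadicInt.toZMod z + 0 * r) (h : ReducesTo hα conj m u) :
    u ^ (p + 1) = 1 := by
  obtain ⟨r, s, hrs, -, rfl⟩ := h
  have h1 : PadicInt.toZMod r.norm = 1 := by
    simpa using congrArg (PadicInt.toZMod (p := p)) hrs
  rw [QuadraticAlgebra.pow_card_add_one hp _ hz, norm_redHom, h1, map_one]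

variable (hα conj) in
lemma exists_reducesTo_of_pow_eq_one (hp : p ≠ 2)
    (hz : ∀ r : ZMod p, r ^ 2 ≠ PadicInt.toZMod z + 0 * r) (hu : u ^ (p + 1) = 1) :
    ∃ m, ReducesTo hα conj m u := by
  obtain ⟨x, rfl⟩ := redHom_surjective z u
  have hx : PadicInt.toZMod x.norm = 1 := by
    rw [← norm_redHom]
    apply algebraMap_injective (a := PadicInt.toZMod z) (b := 0)
    rw [← QuadraticAlgebra.pow_card_add_one hp _ hz, hu, map_one]
  obtain ⟨c, hc, hc1⟩ := PadicInt.exists_mul_self_eq hp (u := x.norm) (w := 1) (by simp)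
    (by simp [hx])
  rw [map_one] at hc1
  have hcu : IsUnit c := by
    rw [← not_not (a := IsUnit c), ← mem_nonunits_iff, ← IsLocalRing.mem_maximalIdeal,
      ← PadicInt.ker_toZMod, RingHom.mem_ker, hc1]
    exact one_ne_zero
  obtain ⟨d, hd⟩ := hcu.exists_right_inv
  have hd1 : PadicInt.toZMod d = 1 := by
    simpa [hc1] using congrArg (PadicInt.toZMod (p := p)) hd
  refine ⟨_, algebraMap ℤ_[p] _ d * x, 0, ?_, rfl, ?_⟩
  · rw [map_mul, QuadraticAlgebra.norm_algebraMap, ← hc]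
    simp only [QuadraticAlgebra.norm_zero]
    linear_combination (c * d + 1) * hd
  · ext <;> simp [redHom, hd1]

end Reduction

/-- `D¹₁ = {x ∈ D¹ : v_D(x-1) ≥ 1}` is normal in `D¹`, and `x_{a,b} ↦ a mod P_E`
induces a group isomorphism of `D¹/D¹₁` onto the norm-one subgroup `{u ∈ k_Eˣ : u^{p+1} = 1}`
of the residue field `k_E = O_E/P_E`: the map lands in the norm-one subgroup, is
multiplicative mod `P_E`, has kernel exactly `D¹₁`, and is surjective; in particular
`D¹/D¹₁` is cyclic of order `q + 1 = p + 1`.  (Note that for `m = x_{a,b} ∈ D`, the entry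
`m 0 0` is exactly `a`.) -/
theorem stmt8 (p : ℕ) [Fact p.Prime] (hp : p ≠ 2)
    (z : ℤ_[p]ˣ) (hz : ¬ ∃ w : ℤ_[p], w * w = (z : ℤ_[p]))
    (E : Type) [Field E] [Algebra ℚ_[p] E] (α : E)
    (hα : α * α = algebraMap ℚ_[p] E ((z : ℤ_[p]) : ℚ_[p]))
    (hα0 : α ∉ Set.range (algebraMap ℚ_[p] E))
    (hspan : ∀ x : E, ∃ a b : ℚ_[p], x = algebraMap ℚ_[p] E a + algebraMap ℚ_[p] E b * α)
    (conj : E →ₐ[ℚ_[p]] E) (hconj : conj α = -α) :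
    -- D¹₁ is normal in D¹
    (∀ g ∈ D1set p E conj, ∀ h ∈ D1set p E conj, vDge p E α conj 1 (h - 1) →
      ∀ gi ∈ D1set p E conj, g * gi = 1 → vDge p E α conj 1 (g * h * gi - 1)) ∧
    -- the map x_{a,b} ↦ a mod P_E lands in the norm-one subgroup {u : u^{p+1} = 1} of k_Eˣ
    (∀ m ∈ D1set p E conj, inPE p E α (m 0 0 ^ (p + 1) - 1)) ∧
    -- it is multiplicative modulo P_E
    (∀ m ∈ D1set p E conj, ∀ m' ∈ D1set p E conj,
      inPE p E α ((m * m') 0 0 - m 0 0 * m' 0 0)) ∧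
    -- its kernel is exactly D¹₁
    (∀ m ∈ D1set p E conj, (vDge p E α conj 1 (m - 1) ↔ inPE p E α (m 0 0 - 1))) ∧
    -- it is surjective onto the norm-one subgroup
    (∀ a ∈ OE p E α, inPE p E α (a ^ (p + 1) - 1) →
      ∃ m ∈ D1set p E conj, inPE p E α (m 0 0 - a)) ∧
    -- D¹/D¹₁ is cyclic of order p + 1
    (∃ g ∈ D1set p E conj,
      (∀ k : ℕ, (vDge p E α conj 1 (g ^ k - 1) ↔ (p + 1) ∣ k)) ∧
      (∀ m ∈ D1set p E conj, ∃ k : ℕ, k < p + 1 ∧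
        ∃ gi ∈ D1set p E conj, g ^ k * gi = 1 ∧ vDge p E α conj 1 (m * gi - 1))) := by
  have hz' := PadicInt.toZMod_ne_sq_of_not_square hp hz
  have : Fact (∀ r : ZMod p, r ^ 2 ≠ PadicInt.toZMod (z : ℤ_[p]) + 0 * r) := ⟨hz'⟩
  have hred {m : Matrix (Fin 2) (Fin 2) E} (hm : m ∈ D1set p E conj) :
      ∃ u, ReducesTo hα conj m u := exists_reducesTo hα hz' hspan hconj hm
  have hinv {m m' : Matrix (Fin 2) (Fin 2) E} {u u'} (h : ReducesTo hα conj m u)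
      (h' : ReducesTo hα conj m' u') (hmm : m * m' = 1) : u * u' = 1 :=
    (hmm ▸ h.mul hconj h').unique hα0 ReducesTo.one
  refine ⟨?_, ?_, ?_, ?_, ?_, ?_⟩
  · intro g hg h hh hh1 gi hgi hggi
    obtain ⟨u, hu⟩ := hred hg
    obtain ⟨v, hv⟩ := hred hh
    obtain ⟨w, hw⟩ := hred hgi
    rw [hv.vDge_sub_one_iff hconj hα0] at hh1
    rw [((hu.mul hconj hv).mul hconj hw).vDge_sub_one_iff hconj hα0, hh1, mul_one]
    exact hinv hu hw hggi
  · intro m hm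
    obtain ⟨u, hu⟩ := hred hm
    have h1 := hu.pow_eq_one hp hz'
    obtain ⟨r, s, -, rfl, rfl⟩ := hu
    have h2 : redHom (z : ℤ_[p]) (r ^ (p + 1) - 1) = 0 := by
      rw [map_sub, map_pow, h1, map_one, sub_self]
    simpa [qmat] using (inPE_toE_iff hα hα0).mpr h2
  · intro m hm m' hm'
    obtain ⟨u, hu⟩ := hred hm
    obtain ⟨u', hu'⟩ := hred hm'
    have h := hu.mul hconj hu'
    obtain ⟨r, s, -, rfl, rfl⟩ := hu
    obtain ⟨r', s', -, rfl, rfl⟩ := hu'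
    have h2 := (h.inPE_sub_iff hα0 (r * r')).mpr (map_mul _ _ _).symm
    rwa [map_mul] at h2
  · intro m hm
    obtain ⟨u, hu⟩ := hred hm
    rw [hu.vDge_sub_one_iff hconj hα0, hu.inPE_sub_one_iff hα0]
  · intro a ha h
    obtain ⟨x, rfl⟩ := (mem_OE_iff hα).mp ha
    rw [← map_pow, ← map_one (toE hα), ← map_sub, inPE_toE_iff hα hα0, map_sub, map_pow, map_one,
      sub_eq_zero] at h
    obtain ⟨m, hm⟩ := exists_reducesTo_of_pow_eq_one hα conj hp hz' h
    exact ⟨m, hm.mem_D1set hconj, (hm.inPE_sub_iff hα0 x).mpr rfl⟩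
  · obtain ⟨ζ, hζ⟩ := QuadraticAlgebra.exists_isPrimitiveRoot (PadicInt.toZMod (z : ℤ_[p]))
    obtain ⟨g, hg⟩ := exists_reducesTo_of_pow_eq_one hα conj hp hz' hζ.pow_eq_one
    refine ⟨g, hg.mem_D1set hconj, fun k => ?_, fun m hm => ?_⟩
    · rw [(hg.pow hconj k).vDge_sub_one_iff hconj hα0, hζ.pow_eq_one_iff_dvd]
    · obtain ⟨u, hu⟩ := hred hm
      obtain ⟨k, hk, rfl⟩ := hζ.eq_pow_of_pow_eq_one (hu.pow_eq_one hp hz')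
      obtain ⟨gi, v, hgi, hggi⟩ := (hg.pow hconj k).exists_mul_eq_one hconj
      refine ⟨k, hk, gi, hgi.mem_D1set hconj, hggi, ?_⟩
      rw [(hu.mul hconj hgi).vDge_sub_one_iff hconj hα0]
      exact hinv (hg.pow hconj k) hgi hggi
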